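/- Suppose the digraph is acyclic and the first n−1 edges form a rooted in-branching with root the vertex indexed n−1. Let e_s and e_t be chords (indices s, t ≥ n−1) that are siblings of branch edges e_p and e_q respectively (indices p, q ≤ n−2, with tail e_s = tail e_p, tail e_t = tail e_q, and p ≠ q). If the entry R q s of the matrix R is nonzero, then the entry R p t equals 0. -/

import Mathlib

open Matrix

/-!
In a rooted in-branching every edge `i` lies on the unique directed paths to the root of exactly
those vertices that reach `tail i`. The matrix `P` recording this is a left inverse of the
branching's incidence matrix `Eτ`, and the incidence matrix `E` of any digraph on the same vertices
factors as `E = Eτ * (P * E)`: follow the branching from the tail of an edge to the root, then back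
to its head. Hence `(Eτᵀ * Eτ)⁻¹ * Eτᵀ * E = P * E`, whose `(i, e)` entry is
`P i (tail e) - P i (head e)`. A nonzero entry therefore gives a directed path from `tail e` to
`tail i`. For the two sibling edges of the theorem, both entries being nonzero would close a
directed cycle through `tail e_p` and `tail e_q`.
-/

section LeftInverse

variable {K m n : Type*} [Field K] [LinearOrder K] [IsStrictOrderedRing K]
  [Fintype m] [Fintype n] [DecidableEq n]

theorem isUnit_transpose_mul_self_of_left_inverse {A : Matrix m n K} {P : Matrix n m K}
    (hPA : P * A = 1) : IsUnit (Aᵀ * A) := by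
  rw [← mulVec_injective_iff_isUnit, ← coe_mulVecLin, ← LinearMap.ker_eq_bot,
    ker_mulVecLin_transpose_mul_self]
  exact LinearMap.ker_eq_bot_of_inverse (g := P.mulVecLin) <| by
    rw [← mulVecLin_mul, hPA, mulVecLin_one]

theorem inv_transpose_mul_self_mul_eq_of_left_inverse {ε : Type*} {A : Matrix m n K}
    {P : Matrix n m K} (hPA : P * A = 1) {C : Matrix m ε K} {Y : Matrix n ε K} (hC : A * Y = C) :
    (Aᵀ * A)⁻¹ * Aᵀ * C = Y := by
  have hdet : IsUnit (Aᵀ * A).det :=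
    (isUnit_iff_isUnit_det _).mp (isUnit_transpose_mul_self_of_left_inverse hPA)
  rw [← hC, Matrix.mul_assoc, ← Matrix.mul_assoc Aᵀ, nonsing_inv_mul_cancel_left _ _ hdet]

end LeftInverse

/-- The one-step relation of the digraph with edges `ε` given by `tail` and `head`; its closures
express reachability and directed cycles. Sub-digraphs are obtained by restricting the two maps. -/
def EdgeStep {V ε : Type*} (tail head : ε → V) (a b : V) : Prop :=
  ∃ e, tail e = a ∧ head e = b

/-- The incidence matrix of a digraph: `1` at the tail and `-1` at the head of each edge. It is
written as a difference, so a loop has a zero column. -/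
def orientedIncMatrix (R : Type*) {V ε : Type*} [DecidableEq V] [Ring R] (tail head : ε → V) :
    Matrix V ε R :=
  of fun v e => (Pi.single (tail e) 1 - Pi.single (head e) 1 : V → R) v

open Classical in
/-- The reachability matrix of a digraph, with entry `1` at `(i, v)` when `v` reaches the tail of
the edge `i`, and `0` otherwise. In an in-branching, column `v` indicates the edges of the path from
`v` to the root. -/
noncomputable def reachMatrix (R : Type*) {V ε : Type*} [Ring R] (tail head : ε → V) :
    Matrix ε V R :=
  of fun i v => if Relation.ReflTransGen (EdgeStep tail head) v (tail i) then 1 else 0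

/-- A spanning in-branching (in-arborescence) with edges `β` directed towards `root`. Reachability of
the root makes every other vertex a tail, so no field records this. -/
structure IsInBranching {V β : Type*} (tail head : β → V) (root : V) : Prop where
  tail_injective : Function.Injective tail
  tail_ne_root : ∀ i, tail i ≠ root
  reflTransGen_root : ∀ v, Relation.ReflTransGen (EdgeStep tail head) v root

section Incidence

variable {R V ε : Type*} [Ring R] [DecidableEq V] {tail head : ε → V}

theorem eq_orientedIncMatrix (hloop : ∀ e, tail e ≠ head e) {E : Matrix V ε R}
    (hE : ∀ v e, E v e = if v = tail e then 1 else if v = head e then -1 else 0) :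
    E = orientedIncMatrix R tail head := by
  ext v e
  simp only [hE, orientedIncMatrix, of_apply, Pi.sub_apply, Pi.single_apply]
  split_ifs with htail hhead
  · exact absurd (htail.symm.trans hhead) (hloop e)
  all_goals simp

theorem mul_orientedIncMatrix_apply [Fintype V] {ι : Type*} (M : Matrix ι V R) (i : ι) (e : ε) :
    (M * orientedIncMatrix R tail head) i e = M i (tail e) - M i (head e) := by
  simp [mul_apply, orientedIncMatrix, Pi.single_apply, mul_sub]

end Incidence

section Reachability

variable {V ε : Type*} {tail head : ε → V}

theorem edgeStep_tail_iff (htail : Function.Injective tail) {j : ε} {v : V} :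
    EdgeStep tail head (tail j) v ↔ head j = v :=
  ⟨fun ⟨_, he, hv⟩ => htail he ▸ hv, fun h => ⟨j, rfl, h⟩⟩

theorem reflTransGen_tail_iff (htail : Function.Injective tail) {j : ε} {v : V} :
    Relation.ReflTransGen (EdgeStep tail head) (tail j) v ↔
      tail j = v ∨ Relation.ReflTransGen (EdgeStep tail head) (head j) v := by
  simp [Relation.ReflTransGen.cases_head_iff (a := tail j), edgeStep_tail_iff htail]

end Reachability

namespace IsInBranching

variable {V β : Type*} {tail head : β → V} {root : V}

theorem not_reflTransGen_root_tail (h : IsInBranching tail head root) (i : β) :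
    ¬ Relation.ReflTransGen (EdgeStep tail head) root (tail i) := fun hreach => by
  obtain hroot | ⟨_, ⟨j, hj, _⟩, _⟩ := hreach.cases_head
  · exact h.tail_ne_root i hroot.symm
  · exact h.tail_ne_root j hj

theorem not_transGen_self (h : IsInBranching tail head root) (v : V) :
    ¬ Relation.TransGen (EdgeStep tail head) v v := by
  induction h.reflTransGen_root v using Relation.ReflTransGen.head_induction_on with
  | refl =>
    intro hcycle
    obtain ⟨_, ⟨j, hj, _⟩, _⟩ := Relation.TransGen.head'_iff.mp hcycle
    exact h.tail_ne_root j hj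
  | head hstep _ ih =>
    obtain ⟨j, rfl, rfl⟩ := hstep
    intro hcycle
    obtain ⟨_, hfirst, hback⟩ := Relation.TransGen.head'_iff.mp hcycle
    obtain rfl := (edgeStep_tail_iff h.tail_injective).mp hfirst
    exact ih (Relation.TransGen.tail' hback ⟨j, rfl, rfl⟩)

theorem not_reflTransGen_head_tail (h : IsInBranching tail head root) (i : β) :
    ¬ Relation.ReflTransGen (EdgeStep tail head) (head i) (tail i) := fun hback =>
  h.not_transGen_self (tail i) (Relation.TransGen.head' ⟨i, rfl, rfl⟩ hback)

section Matrices

variable {R : Type*} [Ring R]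

theorem reachMatrix_apply_root (h : IsInBranching tail head root) (i : β) :
    reachMatrix R tail head i root = 0 :=
  if_neg (h.not_reflTransGen_root_tail i)

theorem reachMatrix_apply_tail [DecidableEq β] (h : IsInBranching tail head root) (i j : β) :
    reachMatrix R tail head i (tail j) =
      reachMatrix R tail head i (head j) + (1 : Matrix β β R) i j := by
  classical
  obtain rfl | hij := eq_or_ne i j
  · simp [reachMatrix, h.not_reflTransGen_head_tail i, Relation.ReflTransGen.refl]
  · simp [reachMatrix, reflTransGen_tail_iff h.tail_injective, h.tail_injective.eq_iff, hij,
      hij.symm]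

variable [DecidableEq V]

theorem reachMatrix_mul_orientedIncMatrix [Fintype V] [DecidableEq β]
    (h : IsInBranching tail head root) :
    reachMatrix R tail head * orientedIncMatrix R tail head = 1 := by
  ext i j
  rw [mul_orientedIncMatrix_apply, h.reachMatrix_apply_tail, add_sub_cancel_left]

theorem orientedIncMatrix_mulVec_reachMatrix_col [Fintype β] (h : IsInBranching tail head root)
    (v : V) :
    orientedIncMatrix R tail head *ᵥ (reachMatrix R tail head).col v =
      Pi.single v 1 - Pi.single root 1 := by
  classical
  induction h.reflTransGen_root v using Relation.ReflTransGen.head_induction_on with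
  | refl =>
    have hcol : (reachMatrix R tail head).col root = 0 := funext h.reachMatrix_apply_root
    rw [hcol, mulVec_zero, sub_self]
  | head hstep _ ih =>
    obtain ⟨j, rfl, rfl⟩ := hstep
    have hcol : (reachMatrix R tail head).col (tail j) =
        (reachMatrix R tail head).col (head j) + Pi.single j 1 := by
      ext i
      simp [h.reachMatrix_apply_tail, one_apply, Pi.single_apply]
    have hinc : (orientedIncMatrix R tail head).col j =
        Pi.single (tail j) 1 - Pi.single (head j) 1 := rfl
    rw [hcol, mulVec_add, ih, mulVec_single_one, hinc]
    abel

theorem orientedIncMatrix_mul_reachMatrix_mul [Fintype V] [Fintype β]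
    (h : IsInBranching tail head root) {ε : Type*} (tail' head' : ε → V) :
    orientedIncMatrix R tail head * (reachMatrix R tail head * orientedIncMatrix R tail' head') =
      orientedIncMatrix R tail' head' := by
  have hentry (u v : V) : (orientedIncMatrix R tail head * reachMatrix R tail head) u v =
      (Pi.single v 1 - Pi.single root 1 : V → R) u :=
    congrFun (h.orientedIncMatrix_mulVec_reachMatrix_col v) u
  ext u e
  rw [← Matrix.mul_assoc, mul_orientedIncMatrix_apply, hentry, hentry]
  simp [orientedIncMatrix]

end Matrices

end IsInBranching

/-- The basic cut-set matrix of a digraph with edges `ε` with respect to the spanning tree formed by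
the edges in the range of `b`: its columns are the coordinates of the incidence vectors of all edges
in those of the tree edges. With the tree edges listed first this is `[I  Tτ]`. -/
noncomputable def basicCutsetMatrix (K : Type*) {V ε β : Type*} [Field K] [Fintype V]
    [DecidableEq V] [Fintype β] [DecidableEq β] (tail head : ε → V) (b : β → ε) : Matrix β ε K :=
  let E := orientedIncMatrix K tail head
  let Eτ := E.submatrix id b
  (Eτᵀ * Eτ)⁻¹ * Eτᵀ * E

section Cutset

variable {K V ε β : Type*} [Field K] [LinearOrder K] [IsStrictOrderedRing K] [Fintype V]
  [DecidableEq V] [Fintype β] [DecidableEq β] {tail head : ε → V} {b : β → ε} {root : V}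

theorem basicCutsetMatrix_apply (hb : IsInBranching (tail ∘ b) (head ∘ b) root) (i : β) (e : ε) :
    basicCutsetMatrix K tail head b i e =
      reachMatrix K (tail ∘ b) (head ∘ b) i (tail e) -
        reachMatrix K (tail ∘ b) (head ∘ b) i (head e) := by
  have hcut : basicCutsetMatrix K tail head b =
      reachMatrix K (tail ∘ b) (head ∘ b) * orientedIncMatrix K tail head :=
    inv_transpose_mul_self_mul_eq_of_left_inverse hb.reachMatrix_mul_orientedIncMatrix
      (hb.orientedIncMatrix_mul_reachMatrix_mul tail head)
  rw [hcut, mul_orientedIncMatrix_apply]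

theorem reflTransGen_of_basicCutsetMatrix_ne_zero
    (hb : IsInBranching (tail ∘ b) (head ∘ b) root) {i : β} {e : ε}
    (hne : basicCutsetMatrix K tail head b i e ≠ 0) :
    Relation.ReflTransGen (EdgeStep tail head) (tail e) (tail (b i)) := by
  have hsub : EdgeStep (tail ∘ b) (head ∘ b) ≤ EdgeStep tail head :=
    fun _ _ ⟨j, hj⟩ => ⟨b j, hj⟩
  by_contra hnot
  have htail : ¬ Relation.ReflTransGen (EdgeStep (tail ∘ b) (head ∘ b)) (tail e) (tail (b i)) :=
    fun hpath => hnot (Relation.ReflTransGen.mono hsub _ _ hpath)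
  have hhead : ¬ Relation.ReflTransGen (EdgeStep (tail ∘ b) (head ∘ b)) (head e) (tail (b i)) :=
    fun hpath => hnot (.head ⟨e, rfl, rfl⟩ (Relation.ReflTransGen.mono hsub _ _ hpath))
  exact hne (by simp [basicCutsetMatrix_apply hb, reachMatrix, htail, hhead])

theorem R_entry_zero_of_sibling_chords_general
    (hb : IsInBranching (tail ∘ b) (head ∘ b) root) {p q : β} {s t : ε}
    (hacyclic : ¬ Relation.TransGen (EdgeStep tail head) (tail (b p)) (tail (b p)))
    (hpq : p ≠ q) (hsp : tail s = tail (b p)) (htq : tail t = tail (b q))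
    (hqs : basicCutsetMatrix K tail head b q s ≠ 0) :
    basicCutsetMatrix K tail head b p t = 0 := by
  by_contra hpt
  have hpath_pq := hsp ▸ reflTransGen_of_basicCutsetMatrix_ne_zero hb hqs
  have hpath_qp := htq ▸ reflTransGen_of_basicCutsetMatrix_ne_zero hb hpt
  obtain htail | hpath_pq := Relation.reflTransGen_iff_eq_or_transGen.mp hpath_pq
  · exact hpq (hb.tail_injective htail.symm)
  · exact hacyclic (hpath_pq.trans_left hpath_qp)

end Cutset

/-- For an acyclic digraph whose first `n-1` edges form a rooted
in-branching with root the vertex `n-1`, let chords `e_s, e_t` (indices `≥ n-1`) be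
siblings of branch edges `e_p, e_q` respectively (indices `≤ n-2`, `p ≠ q`).
If `R q s ≠ 0` then `R p t = 0`. -/
theorem R_entry_zero_of_sibling_chords
    (n m : ℕ) (hn : 2 ≤ n) (hm : 1 ≤ m) (hmn : n - 1 ≤ m)
    (tail head : Fin m → Fin n) (hth : ∀ e, tail e ≠ head e)
    (w : Fin m → ℝ)
    (E : Matrix (Fin n) (Fin m) ℝ)
    (hE : ∀ v e, E v e = if v = tail e then 1 else if v = head e then -1 else 0)
    (hacyclic : ∀ v : Fin n,
      ¬ Relation.TransGen (fun a b => ∃ e, tail e = a ∧ head e = b) v v)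
    (root : Fin n) (hroot : root = ⟨n - 1, by omega⟩)
    -- the first n-1 edges form a rooted in-branching with root `root`:
    (hinj : Function.Injective (fun i : Fin (n - 1) => tail ⟨i.val, lt_of_lt_of_le i.2 hmn⟩))
    (hnotroot : ∀ i : Fin (n - 1), tail ⟨i.val, lt_of_lt_of_le i.2 hmn⟩ ≠ root)
    (hsurj : ∀ v : Fin n, v ≠ root → ∃ i : Fin (n - 1), tail ⟨i.val, lt_of_lt_of_le i.2 hmn⟩ = v)
    (hreach : ∀ v : Fin n, Relation.ReflTransGen
      (fun a b => ∃ e : Fin m, e.val < n - 1 ∧ tail e = a ∧ head e = b) v root)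
    (Eτ : Matrix (Fin n) (Fin (n - 1)) ℝ)
    (hEτ : Eτ = E.submatrix id (fun i : Fin (n - 1) => ⟨i.val, lt_of_lt_of_le i.2 hmn⟩))
    (Ec : Matrix (Fin n) (Fin (m - (n - 1))) ℝ)
    (hEc : Ec = E.submatrix id
      (fun j : Fin (m - (n - 1)) => ⟨n - 1 + j.val, by have := j.2; omega⟩))
    (Tτ : Matrix (Fin (n - 1)) (Fin (m - (n - 1))) ℝ)
    (hTτ : Tτ = (Eτᵀ * Eτ)⁻¹ * Eτᵀ * Ec)
    (R : Matrix (Fin (n - 1)) (Fin m) ℝ)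
    (hR : ∀ (i : Fin (n - 1)) (j : Fin m), R i j =
      if h : j.val < n - 1 then (if i.val = j.val then 1 else 0)
      else Tτ i ⟨j.val - (n - 1), by have := j.2; omega⟩)
    (p q s t : Fin m) (hp : p.val < n - 1) (hq : q.val < n - 1)
    (hs : n - 1 ≤ s.val) (ht : n - 1 ≤ t.val) (hpq : p ≠ q)
    (hsp : tail s = tail p) (htq : tail t = tail q)
    (hRqs : R ⟨q.val, hq⟩ s ≠ 0) :
    R ⟨p.val, hp⟩ t = 0 := by
  obtain rfl := eq_orientedIncMatrix hth hE
  have hb : IsInBranching (tail ∘ Fin.castLE hmn) (head ∘ Fin.castLE hmn) root :=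
    ⟨hinj, hnotroot, fun v => Relation.ReflTransGen.mono
      (fun _ _ ⟨e, he, hends⟩ => ⟨⟨e, he⟩, hends⟩) _ _ (hreach v)⟩
  have hRchord (i : Fin (n - 1)) (j : Fin m) (hj : n - 1 ≤ j.val) :
      R i j = basicCutsetMatrix ℝ tail head (Fin.castLE hmn) i j := by
    have hindex : (⟨n - 1 + (j.val - (n - 1)), by omega⟩ : Fin m) = j :=
      Fin.ext (Nat.add_sub_cancel' hj)
    rw [hR, dif_neg hj.not_gt, hTτ, hEτ, hEc]
    exact congrArg (basicCutsetMatrix ℝ tail head (Fin.castLE hmn) i) hindex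
  rw [hRchord _ _ hs] at hRqs
  rw [hRchord _ _ ht]
  exact R_entry_zero_of_sibling_chords_general hb (hacyclic _)
    (fun h => hpq (Fin.ext (Fin.mk.inj h))) hsp htq hRqs
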